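/- Let a < b, 1/2 < α ≤ 1, and q continuous on [a,b]. If the integral equation u(x) = ∫_a^b G(x,t) q(t) u(t) dt has a nontrivial continuous solution, then ∫_a^b (K(a,a)K(s,s) - K(a,s)²) · q⁺(s) ds ≥ (b-a)^{2α-1}/(Γ(α)²(2α-1)), where q⁺(s) = max{q(s), 0}. -/

import Mathlib

open Real MeasureTheory Set

/-- Kernel `K(x,t) = (1/Γ(α)²) ∫_{max{x,t}}^{b} (s-x)^{α-1}(s-t)^{α-1} ds`. -/
noncomputable def K (b α x t : ℝ) : ℝ :=
  (1 / Real.Gamma α ^ 2) * ∫ s in max x t..b, (s - x) ^ (α - 1) * (s - t) ^ (α - 1)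

/-- Green's function `G(x,t) = K(x,t) - K(a,t)K(x,a)/K(a,a)`. -/
noncomputable def G (a b α x t : ℝ) : ℝ :=
  K b α x t - K b α a t * K b α x a / K b α a a

theorem hw_abstract {H : Type*} [NormedAddCommGroup H] [InnerProductSpace ℝ H] [CompleteSpace H]
    (a b : ℝ) (hab : a < b) (ψ : ℝ → H) (hψ : ContinuousOn ψ (Set.Icc a b))
    (q u : ℝ → ℝ) (hq : ContinuousOn q (Set.Icc a b)) (hu : ContinuousOn u (Set.Icc a b))
    (hnt : ∃ x ∈ Set.Icc a b, u x ≠ 0)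
    (heq : ∀ x ∈ Set.Icc a b, u x = ∫ t in a..b, inner ℝ (ψ x) (ψ t) * q t * u t) :
    1 ≤ ∫ s in a..b, inner ℝ (ψ s) (ψ s) * max (q s) 0 := by
  have hle := hab.le
  have hI : Set.uIcc a b = Set.Icc a b := Set.uIcc_of_le hle
  have hint : IntervalIntegrable (fun t => (q t * u t) • ψ t) volume a b := by
    apply ContinuousOn.intervalIntegrable
    rw [hI]
    exact (hq.mul hu).smul hψ
  set v : H := ∫ t in a..b, (q t * u t) • ψ t with hv
  have key : ∀ w : H, inner ℝ w v = ∫ t in a..b, inner ℝ w (ψ t) * q t * u t := by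
    intro w
    have := (innerSL ℝ w).intervalIntegral_comp_comm hint
    simp only [innerSL_apply_apply] at this
    rw [hv, ← this]
    congr 1
    ext t
    rw [inner_smul_right]; ring
  have hux : ∀ x ∈ Set.Icc a b, u x = inner ℝ (ψ x) v := fun x hx => by
    rw [heq x hx, key]
  have hvv : inner ℝ v v = ∫ t in a..b, q t * u t ^ 2 := by
    rw [key]
    apply intervalIntegral.integral_congr
    intro t ht
    rw [hI] at ht
    have := hux t ht
    rw [real_inner_comm] at this
    simp only [← this]; ring
  have hpos : 0 < inner ℝ v v := by
    obtain ⟨x, hx, hne⟩ := hnt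
    rw [real_inner_self_eq_norm_sq]
    have : v ≠ 0 := by
      intro h0
      apply hne
      rw [hux x hx, h0, inner_zero_right]
    positivity
  have hcq : ContinuousOn (fun s => max (q s) 0) (Set.Icc a b) := hq.sup continuousOn_const
  have hle2 : inner ℝ v v ≤ ∫ t in a..b, (inner ℝ (ψ t) (ψ t) * max (q t) 0) * inner ℝ v v := by
    conv_lhs => rw [hvv]
    apply intervalIntegral.integral_mono_on hle
    · apply ContinuousOn.intervalIntegrable
      rw [hI]; exact hq.mul (hu.pow 2)
    · apply ContinuousOn.intervalIntegrable
      rw [hI]; exact ((hψ.inner hψ).mul hcq).mul continuousOn_const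
    · intro t ht
      have h1 : u t ^ 2 ≤ inner ℝ (ψ t) (ψ t) * inner ℝ v v := by
        rw [hux t ht, sq]
        exact real_inner_mul_inner_self_le _ _
      calc q t * u t ^ 2 ≤ max (q t) 0 * u t ^ 2 := by gcongr; exact le_max_left _ _
        _ ≤ max (q t) 0 * (inner ℝ (ψ t) (ψ t) * inner ℝ v v) := by
          gcongr
        _ = _ := by ring
  rw [intervalIntegral.integral_mul_const] at hle2
  by_contra hcon
  push Not at hcon
  nlinarith

noncomputable def hwφ (b α t : ℝ) : ℝ → ℝ := Set.indicator (Set.Ioc t b) (fun s => (s - t) ^ (α - 1))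

theorem hw_ii (α : ℝ) (hα₁ : 1 / 2 < α) (t c d : ℝ) :
    IntervalIntegrable (fun s => (s - t) ^ (2 * α - 2)) volume c d := by
  have := (intervalIntegral.intervalIntegrable_rpow' (a := c - t) (b := d - t)
    (r := 2 * α - 2) (by linarith)).comp_sub_right t
  simpa using this

theorem hw_int (α : ℝ) (hα₁ : 1 / 2 < α) (t c d : ℝ) :
    ∫ s in c..d, (s - t) ^ (2 * α - 2) =
      ((d - t) ^ (2 * α - 1) - (c - t) ^ (2 * α - 1)) / (2 * α - 1) := by
  rw [intervalIntegral.integral_comp_sub_right (fun x => x ^ (2 * α - 2)) t,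
    integral_rpow (Or.inl (by linarith))]
  ring_nf

theorem hw_sq (α : ℝ) {x : ℝ} (hx : 0 < x) : x ^ (α - 1) * x ^ (α - 1) = x ^ (2 * α - 2) := by
  rw [← Real.rpow_add hx]; ring_nf

theorem hw_memLp (b α : ℝ) (hα₁ : 1 / 2 < α) (t : ℝ) : MemLp (hwφ b α t) 2 volume := by
  have hm : Measurable (hwφ b α t) := by
    unfold hwφ
    exact Measurable.indicator (by fun_prop) measurableSet_Ioc
  rw [memLp_two_iff_integrable_sq hm.aestronglyMeasurable]
  have h : (fun s => hwφ b α t s ^ 2) =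
      Set.indicator (Set.Ioc t b) (fun s => (s - t) ^ (2 * α - 2)) := by
    ext s
    unfold hwφ
    by_cases hs : s ∈ Set.Ioc t b
    · rw [Set.indicator_of_mem hs, Set.indicator_of_mem hs, sq, hw_sq _ (by linarith [hs.1])]
    · simp [Set.indicator_of_notMem hs]
  rw [h, integrable_indicator_iff measurableSet_Ioc]
  exact (hw_ii α hα₁ t t b).1

noncomputable def hwΦ (b α : ℝ) (hα₁ : 1 / 2 < α) (t : ℝ) : Lp ℝ 2 (volume : Measure ℝ) :=
  (1 / Real.Gamma α) • (hw_memLp b α hα₁ t).toLp (hwφ b α t)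

theorem hw_mul (b α x t : ℝ) : (fun s => hwφ b α x s * hwφ b α t s) =
    Set.indicator (Set.Ioc (max x t) b) (fun s => (s - x) ^ (α - 1) * (s - t) ^ (α - 1)) := by
  ext s
  unfold hwφ
  simp only [Set.indicator_apply, Set.mem_Ioc, max_lt_iff]
  split_ifs <;> first | rfl | (exfalso; tauto) | simp

theorem hw_inner (b α : ℝ) (hα₁ : 1 / 2 < α) (x t : ℝ) (hx : x ≤ b) (ht : t ≤ b) :
    inner ℝ (hwΦ b α hα₁ x) (hwΦ b α hα₁ t) = K b α x t := by
  have h : inner ℝ ((hw_memLp b α hα₁ x).toLp (hwφ b α x))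
      ((hw_memLp b α hα₁ t).toLp (hwφ b α t)) = ∫ s, hwφ b α x s * hwφ b α t s := by
    rw [L2.inner_def]
    apply integral_congr_ae
    filter_upwards [(hw_memLp b α hα₁ x).coeFn_toLp, (hw_memLp b α hα₁ t).coeFn_toLp] with s h1 h2
    rw [h1, h2]
    simp [mul_comm]
  unfold hwΦ K
  rw [real_inner_smul_left, real_inner_smul_right, h, hw_mul,
    integral_indicator measurableSet_Ioc, intervalIntegral.integral_of_le (max_le hx ht)]
  ring

theorem hw_diag (b α : ℝ) (hα₁ : 1 / 2 < α) (t : ℝ) (ht : t ≤ b) :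
    K b α t t = (b - t) ^ (2 * α - 1) / (Real.Gamma α ^ 2 * (2 * α - 1)) := by
  have h : ∫ s in t..b, (s - t) ^ (α - 1) * (s - t) ^ (α - 1)
      = ∫ s in t..b, (s - t) ^ (2 * α - 2) := by
    rw [intervalIntegral.integral_of_le ht, intervalIntegral.integral_of_le ht]
    apply setIntegral_congr_fun measurableSet_Ioc
    intro s hs
    exact hw_sq _ (by linarith [hs.1])
  unfold K
  rw [max_self, h, hw_int α hα₁, sub_self, Real.zero_rpow (by linarith)]
  rw [sub_zero, div_mul_div_comm, one_mul]

theorem hw_lower (b α : ℝ) (hα₁ : 1 / 2 < α) (hα₂ : α ≤ 1) (r t : ℝ) (hrt : r ≤ t) (ht : t ≤ b) :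
    ((b - r) ^ (2 * α - 1) - (t - r) ^ (2 * α - 1)) / (Real.Gamma α ^ 2 * (2 * α - 1))
      ≤ K b α r t := by
  unfold K
  rw [max_eq_right hrt]
  have h0 : IntegrableOn (fun s => (s - r) ^ (α - 1) * (s - t) ^ (α - 1)) (Set.Ioc t b) := by
    have := (hw_memLp b α hα₁ r).integrable_mul (hw_memLp b α hα₁ t)
    have h2 := hw_mul b α r t
    change Integrable (fun s => hwφ b α r s * hwφ b α t s) volume at this
    rw [h2, max_eq_right hrt, integrable_indicator_iff measurableSet_Ioc] at this
    exact this
  have h : ∫ s in t..b, (s - r) ^ (2 * α - 2)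
      ≤ ∫ s in t..b, (s - r) ^ (α - 1) * (s - t) ^ (α - 1) := by
    rw [intervalIntegral.integral_of_le ht, intervalIntegral.integral_of_le ht]
    apply setIntegral_mono_on (hw_ii α hα₁ r t b).1 h0 measurableSet_Ioc
    intro s hs
    have h1 : 0 < s - t := by linarith [hs.1]
    have h2 : 0 < s - r := by linarith
    rw [← hw_sq α h2]
    apply mul_le_mul_of_nonneg_left _ (Real.rpow_nonneg h2.le _)
    exact Real.rpow_le_rpow_of_nonpos h1 (by linarith) (by linarith)
  rw [hw_int α hα₁] at h
  calc _ = (1 / Real.Gamma α ^ 2) *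
      (((b - r) ^ (2 * α - 1) - (t - r) ^ (2 * α - 1)) / (2 * α - 1)) := by
        rw [div_mul_div_comm, one_mul]
    _ ≤ _ := by gcongr

theorem hw_dist (b α : ℝ) (hα₁ : 1 / 2 < α) (hα₂ : α ≤ 1) (r t : ℝ) (hrt : r ≤ t) (ht : t ≤ b) :
    ‖hwΦ b α hα₁ r - hwΦ b α hα₁ t‖ ^ 2 ≤
      2 / (Real.Gamma α ^ 2 * (2 * α - 1)) * |t - r| ^ (2 * α - 1) := by
  have hr := hrt.trans ht
  rw [norm_sub_sq_real, ← real_inner_self_eq_norm_sq, ← real_inner_self_eq_norm_sq,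
    hw_inner _ _ _ _ _ hr hr, hw_inner _ _ _ _ _ ht ht, hw_inner _ _ _ _ _ hr ht,
    hw_diag _ _ hα₁ _ hr, hw_diag _ _ hα₁ _ ht, abs_of_nonneg (sub_nonneg.2 hrt)]
  have h1 := hw_lower b α hα₁ hα₂ r t hrt ht
  have hG : 0 < Real.Gamma α ^ 2 * (2 * α - 1) := by
    have := Real.Gamma_pos_of_pos (s := α) (by linarith)
    have : 0 < 2 * α - 1 := by linarith
    positivity
  have h2 : (b - t) ^ (2 * α - 1) / (Real.Gamma α ^ 2 * (2 * α - 1)) ≤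
      (b - r) ^ (2 * α - 1) / (Real.Gamma α ^ 2 * (2 * α - 1)) := by
    have : (b - t) ^ (2 * α - 1) ≤ (b - r) ^ (2 * α - 1) :=
      Real.rpow_le_rpow (by linarith) (by linarith) (by linarith)
    gcongr
  rw [sub_div] at h1
  have h3 : 2 / (Real.Gamma α ^ 2 * (2 * α - 1)) * (t - r) ^ (2 * α - 1) =
    2 * ((t - r) ^ (2 * α - 1) / (Real.Gamma α ^ 2 * (2 * α - 1))) := by ring
  rw [h3]
  linarith

theorem hw_cont (b α : ℝ) (hα₁ : 1 / 2 < α) (hα₂ : α ≤ 1) :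
    ContinuousOn (hwΦ b α hα₁) (Set.Iic b) := by
  intro t ht
  have hd : ∀ r ∈ Set.Iic b, ‖hwΦ b α hα₁ r - hwΦ b α hα₁ t‖ ^ 2 ≤
      2 / (Real.Gamma α ^ 2 * (2 * α - 1)) * |t - r| ^ (2 * α - 1) := by
    intro r hr
    rcases le_total r t with h | h
    · exact hw_dist b α hα₁ hα₂ r t h ht
    · rw [norm_sub_rev, abs_sub_comm]
      exact hw_dist b α hα₁ hα₂ t r h hr
  have hlim : Filter.Tendsto (fun r => √(2 / (Real.Gamma α ^ 2 * (2 * α - 1)) *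
      |t - r| ^ (2 * α - 1))) (nhdsWithin t (Set.Iic b)) (nhds 0) := by
    have hc : Continuous (fun r : ℝ => √(2 / (Real.Gamma α ^ 2 * (2 * α - 1)) *
      |t - r| ^ (2 * α - 1))) := by
      apply Real.continuous_sqrt.comp
      apply continuous_const.mul
      exact Continuous.rpow_const (by fun_prop) (fun x => Or.inr (by linarith))
    have := hc.tendsto t
    simp only [sub_self, abs_zero] at this
    rw [Real.zero_rpow (by linarith), mul_zero, Real.sqrt_zero] at this
    exact this.mono_left nhdsWithin_le_nhds
  rw [ContinuousWithinAt, tendsto_iff_norm_sub_tendsto_zero]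
  apply squeeze_zero' (Filter.Eventually.of_forall fun _ => norm_nonneg _) _ hlim
  filter_upwards [self_mem_nhdsWithin] with r hr
  exact Real.le_sqrt_of_sq_le (hd r hr)

/-- Hartman–Wintner-type inequality for the fractional problem. -/
theorem hartman_wintner_fractional (a b α : ℝ) (hab : a < b)
    (hα₁ : 1 / 2 < α) (hα₂ : α ≤ 1)
    (q u : ℝ → ℝ) (hq : ContinuousOn q (Set.Icc a b)) (hu : ContinuousOn u (Set.Icc a b))
    (hnt : ∃ x ∈ Set.Icc a b, u x ≠ 0)
    (heq : ∀ x ∈ Set.Icc a b, u x = ∫ t in a..b, G a b α x t * q t * u t) :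
    (∫ s in a..b, (K b α a a * K b α s s - K b α a s ^ 2) * max (q s) 0) ≥
      (b - a) ^ (2 * α - 1) / (Real.Gamma α ^ 2 * (2 * α - 1)) := by
  rw [← hw_diag b α hα₁ a hab.le]
  have hI : Set.uIcc a b = Set.Icc a b := Set.uIcc_of_le hab.le
  have hK : 0 < K b α a a := by
    rw [hw_diag b α hα₁ a hab.le]
    have := Real.Gamma_pos_of_pos (s := α) (by linarith)
    have : 0 < 2 * α - 1 := by linarith
    have : 0 < b - a := by linarith
    positivity
  have hφ : ContinuousOn (hwΦ b α hα₁) (Set.Icc a b) :=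
    (hw_cont b α hα₁ hα₂).mono Set.Icc_subset_Iic_self
  set Φ := hwΦ b α hα₁ with hΦ
  have hin : ∀ x ∈ Set.Icc a b, ∀ t ∈ Set.Icc a b, inner ℝ (Φ x) (Φ t) = K b α x t :=
    fun x hx t ht => hw_inner b α hα₁ x t hx.2 ht.2
  have ha : a ∈ Set.Icc a b := ⟨le_rfl, hab.le⟩
  let ψ : ℝ → Lp ℝ 2 (volume : Measure ℝ) :=
    fun t => Φ t - (inner ℝ (Φ a) (Φ t) / K b α a a) • Φ a
  have hψ : ContinuousOn ψ (Set.Icc a b) := by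
    have h1 : ContinuousOn (fun t => inner ℝ (Φ a) (Φ t)) (Set.Icc a b) :=
      ContinuousOn.inner (𝕜 := ℝ) continuousOn_const hφ
    have h2 : ContinuousOn (fun t => (inner ℝ (Φ a) (Φ t) / K b α a a) • Φ a) (Set.Icc a b) :=
      ContinuousOn.smul (h1.div_const _) continuousOn_const
    exact hφ.sub h2
  have hG : ∀ x ∈ Set.Icc a b, ∀ t ∈ Set.Icc a b, inner ℝ (ψ x) (ψ t) = G a b α x t := by
    intro x hx t ht
    have hsym : K b α a x = K b α x a := by
      rw [← hin a ha x hx, ← hin x hx a ha, real_inner_comm]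
    simp only [ψ, inner_sub_left, inner_sub_right, real_inner_smul_left, real_inner_smul_right]
    rw [hin x hx t ht, hin a ha t ht, hin a ha x hx, hin x hx a ha, hin a ha a ha, hsym, G]
    field_simp
    ring
  have h1 := hw_abstract a b hab ψ hψ q u hq hu hnt (by
    intro x hx
    rw [heq x hx]
    apply intervalIntegral.integral_congr
    intro t ht
    rw [hI] at ht
    simp only [hG x hx t ht])
  have h2 : (∫ s in a..b, (K b α a a * K b α s s - K b α a s ^ 2) * max (q s) 0) =
      K b α a a * ∫ s in a..b, inner ℝ (ψ s) (ψ s) * max (q s) 0 := by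
    rw [← intervalIntegral.integral_const_mul]
    apply intervalIntegral.integral_congr
    intro s hs
    rw [hI] at hs
    have hsym : K b α a s = K b α s a := by
      rw [← hin a ha s hs, ← hin s hs a ha, real_inner_comm]
    simp only [hG s hs s hs, G, hsym]
    field_simp
  rw [h2]
  exact le_mul_of_one_le_right hK.le h1
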